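/- Lemma (part b). Let 𝒢 be a polynomial in x₁, x₂, y₁, y₂ over a field of characteristic zero which is bihomogeneous of orders (p,q), and let ℓ ≥ 1. Then Ω_{xy}^ℓ((x y)·𝒢) = ℓ·(p+q−ℓ+3)·Ω_{xy}^{ℓ−1}𝒢 + (x y)·Ω_{xy}^ℓ𝒢, where Ω_{xy} = ∂²/∂x₁∂y₂ − ∂²/∂y₁∂x₂ and (x y) = x₁y₂ − y₁x₂. -/

import Mathlib

open MvPolynomial

/-- The Cayley Omega operator `Ω_{xy} = ∂²/∂x₁∂y₂ − ∂²/∂y₁∂x₂`, where the four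
variables are indexed as `x₁ = 0`, `x₂ = 1`, `y₁ = 2`, `y₂ = 3`. -/
noncomputable def Omega {k : Type*} [CommRing k] (G : MvPolynomial (Fin 4) k) :
    MvPolynomial (Fin 4) k :=
  pderiv (0 : Fin 4) (pderiv 3 G) - pderiv 2 (pderiv 1 G)

/-- The bracket factor `(x y) = x₁y₂ − y₁x₂`. -/
noncomputable def bracket {k : Type*} [CommRing k] : MvPolynomial (Fin 4) k :=
  X 0 * X 3 - X 2 * X 1

/-- A polynomial in `x₁, x₂, y₁, y₂` is bihomogeneous of orders `(p,q)` if it is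
homogeneous of degree `p` in `(x₁,x₂)` and of degree `q` in `(y₁,y₂)`. -/
def Bihomogeneous {k : Type*} [CommRing k] (G : MvPolynomial (Fin 4) k)
    (p q : ℕ) : Prop :=
  G.IsWeightedHomogeneous ![1, 1, 0, 0] p ∧ G.IsWeightedHomogeneous ![0, 0, 1, 1] q

/-!
Write `E = ∑ xᵢ ∂ᵢ` for the Euler operator in the four variables. The Leibniz rule gives
`[Ω, (x y)] = E + 2`, and `[E, Ω] = -2 Ω` because `Ω` lowers the total degree by two. Hence `Ω`,
`(x y)` and `E + 2` satisfy the relations of `sl₂` up to sign, and the `sl₂` commutation formula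
`[Ω^ℓ, (x y)] = ℓ Ω^(ℓ-1) (E + 2 - (ℓ - 1))` becomes the claim on a form of degree `p + q`, where
`E` acts as multiplication by `p + q`.
-/

lemma pow_succ_lie_of_lie_lie {A : Type*} [Ring A] {a b : A} (h : ⁅⁅a, b⁆, a⁆ = -(2 • a))
    (n : ℕ) : ⁅a ^ (n + 1), b⁆ = (n + 1) • (a ^ n * (⁅a, b⁆ - n • 1)) := by
  have lie_mul_self : ⁅a, b⁆ * a = a * (⁅a, b⁆ - 2 • 1) := by
    rw [mul_sub, mul_smul_comm, mul_one, sub_eq_add_neg, ← h, Ring.lie_def ⁅a, b⁆ a,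
      add_sub_cancel]
  induction n with
  | zero => simp
  | succ n ih =>
    have lie_sub_mul_self : (⁅a, b⁆ - n • 1) * a = a * (⁅a, b⁆ - (n + 2) • 1) := by
      rw [sub_mul, lie_mul_self, smul_mul_assoc, one_mul]
      simp only [mul_sub, mul_smul_comm, mul_one]
      module
    calc ⁅a ^ (n + 2), b⁆ = a ^ (n + 1) * ⁅a, b⁆ + ⁅a ^ (n + 1), b⁆ * a := by
          simp only [Ring.lie_def, pow_succ]
          noncomm_ring
      _ = a ^ (n + 1) * ⁅a, b⁆ + (n + 1) • (a ^ (n + 1) * (⁅a, b⁆ - (n + 2) • 1)) := by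
          rw [ih, smul_mul_assoc, mul_assoc, lie_sub_mul_self, ← mul_assoc, ← pow_succ]
      _ = (n + 2) • (a ^ (n + 1) * (⁅a, b⁆ - (n + 1) • 1)) := by
          simp only [mul_sub, mul_smul_comm, mul_one]
          module

section Euler

variable {σ R : Type*} [Fintype σ]

section CommSemiring

variable [CommSemiring R]

variable (σ R) in
/-- The Euler operator `∑ Xᵢ ∂/∂Xᵢ`, as a derivation of the polynomial ring. -/
noncomputable def euler : Derivation R (MvPolynomial σ R) (MvPolynomial σ R) :=
  ∑ i, (X i : MvPolynomial σ R) • pderiv i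

lemma euler_apply (F : MvPolynomial σ R) : euler σ R F = ∑ i, X i * pderiv i F := by
  have coe_euler : ⇑(euler σ R) = ∑ i, ⇑((X i : MvPolynomial σ R) • pderiv (R := R) i) :=
    map_sum Derivation.coeFnAddMonoidHom _ _
  simp [coe_euler]

lemma euler_X (i : σ) : euler σ R (X i : MvPolynomial σ R) = X i := by
  classical
  simp [euler_apply, pderiv_X, Pi.single_apply]

end CommSemiring

variable [CommRing R]

lemma lie_euler_pderiv (i : σ) : ⁅euler σ R, pderiv (R := R) i⁆ = -pderiv i := by
  classical
  refine derivation_ext fun j => ?_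
  have euler_pderiv_X : euler σ R (pderiv i (X j : MvPolynomial σ R)) = 0 := by
    rw [pderiv_X, Pi.single_apply]
    split_ifs <;> simp
  rw [Derivation.commutator_apply, euler_X, euler_pderiv_X, zero_sub, Derivation.neg_apply]

lemma euler_pderiv (i : σ) (F : MvPolynomial σ R) :
    euler σ R (pderiv i F) = pderiv i (euler σ R F) - pderiv i F := by
  have h := DFunLike.congr_fun (lie_euler_pderiv (R := R) i) F
  rw [Derivation.commutator_apply, Derivation.neg_apply] at h
  linear_combination h

end Euler

lemma isWeightedHomogeneous_add_weight {σ R M : Type*} [CommSemiring R] [AddCommMonoid M]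
    {w₁ w₂ : σ → M} {m₁ m₂ : M} {F : MvPolynomial σ R} (h₁ : F.IsWeightedHomogeneous w₁ m₁)
    (h₂ : F.IsWeightedHomogeneous w₂ m₂) : F.IsWeightedHomogeneous (w₁ + w₂) (m₁ + m₂) := by
  intro d hd
  rw [← h₁ hd, ← h₂ hd]
  simp only [Finsupp.weight_apply, Pi.add_apply, smul_add, Finsupp.sum_add]

section Omega

variable {k : Type*} [CommRing k]

lemma Bihomogeneous.isHomogeneous {G : MvPolynomial (Fin 4) k} {p q : ℕ}
    (hG : Bihomogeneous G p q) : G.IsHomogeneous (p + q) := by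
  have weight_eq : (1 : Fin 4 → ℕ) = ![1, 1, 0, 0] + ![0, 0, 1, 1] := by decide
  rw [IsHomogeneous, weight_eq]
  exact isWeightedHomogeneous_add_weight hG.1 hG.2

lemma Omega_bracket_mul (F : MvPolynomial (Fin 4) k) :
    Omega (bracket * F) = euler (Fin 4) k F + 2 • F + bracket * Omega F := by
  simp only [Omega, bracket, euler_apply, Fin.sum_univ_four, Derivation.leibniz, map_add, map_sub,
    smul_eq_mul, pderiv_X, Pi.single_eq_same, Pi.single_eq_of_ne, ne_eq, Fin.reduceEq,
    not_false_eq_true, one_ne_zero, zero_ne_one, map_zero, Derivation.map_one_eq_zero]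
  ring

lemma euler_Omega (F : MvPolynomial (Fin 4) k) :
    euler (Fin 4) k (Omega F) = Omega (euler (Fin 4) k F) - 2 • Omega F := by
  simp only [Omega, map_sub, euler_pderiv]
  module

variable (k) in
/-- The operator `Omega` as a `k`-linear endomorphism, so that its iterates are powers in a ring. -/
noncomputable def omegaEnd : Module.End k (MvPolynomial (Fin 4) k) where
  toFun := Omega
  map_add' F G := by
    simp only [Omega, map_add]
    ring
  map_smul' c F := by simp only [Omega, Derivation.map_smul, smul_sub, RingHom.id_apply]

lemma omegaEnd_apply (F : MvPolynomial (Fin 4) k) : omegaEnd k F = Omega F := rfl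

lemma omegaEnd_pow_apply (n : ℕ) (F : MvPolynomial (Fin 4) k) : (omegaEnd k ^ n) F = Omega^[n] F :=
  Module.End.pow_apply (omegaEnd k) n F

lemma lie_omegaEnd_mulLeft_bracket :
    ⁅omegaEnd k, LinearMap.mulLeft k (bracket (k := k))⁆ =
      (euler (Fin 4) k).toLinearMap + 2 • 1 := by
  refine LinearMap.ext fun F => ?_
  simp [Ring.lie_def, omegaEnd_apply, Omega_bracket_mul]

lemma lie_lie_omegaEnd_mulLeft_bracket :
    ⁅⁅omegaEnd k, LinearMap.mulLeft k (bracket (k := k))⁆, omegaEnd k⁆ = -(2 • omegaEnd k) := by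
  rw [lie_omegaEnd_mulLeft_bracket]
  refine LinearMap.ext fun F => ?_
  simp only [Ring.lie_def, LinearMap.sub_apply, Module.End.mul_apply, LinearMap.add_apply,
    LinearMap.smul_apply, LinearMap.neg_apply, Module.End.one_apply, Derivation.coeFn_coe, map_add,
    map_nsmul, omegaEnd_apply, euler_Omega]
  abel

lemma Omega_iterate_succ_bracket_mul (F : MvPolynomial (Fin 4) k) (n : ℕ) :
    Omega^[n + 1] (bracket * F) =
      (n + 1) • Omega^[n] (euler (Fin 4) k F + 2 • F - n • F) + bracket * Omega^[n + 1] F := by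
  have h := pow_succ_lie_of_lie_lie (lie_lie_omegaEnd_mulLeft_bracket (k := k)) n
  rw [lie_omegaEnd_mulLeft_bracket, Ring.lie_def, sub_eq_iff_eq_add] at h
  simpa only [Module.End.mul_apply, LinearMap.add_apply, LinearMap.sub_apply, LinearMap.smul_apply,
    Module.End.one_apply, LinearMap.mulLeft_apply, Derivation.coeFn_coe, omegaEnd_pow_apply]
    using LinearMap.congr_fun h F

end Omega

theorem omega_pow_bracket_comm_general {k : Type*} [CommRing k] (G : MvPolynomial (Fin 4) k)
    (d ℓ : ℕ) (hl : 1 ≤ ℓ) (hG : G.IsHomogeneous d) :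
    Omega^[ℓ] (bracket * G)
      = C ((((ℓ : ℤ) * ((d : ℤ) - ℓ + 3) : ℤ) : k)) * Omega^[ℓ - 1] G
        + bracket * Omega^[ℓ] G := by
  obtain ⟨n, rfl⟩ := Nat.exists_eq_add_of_le' hl
  have euler_eq : euler (Fin 4) k G + 2 • G - n • G = (d + 2 - n : ℤ) • G := by
    rw [euler_apply, hG.sum_X_mul_pderiv]
    module
  have Omega_iterate_zsmul : Omega^[n] ((d + 2 - n : ℤ) • G) = (d + 2 - n : ℤ) • Omega^[n] G := by
    simp only [← omegaEnd_pow_apply, map_zsmul]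
  rw [Omega_iterate_succ_bracket_mul, euler_eq, Omega_iterate_zsmul, Nat.add_sub_cancel]
  simp only [nsmul_eq_mul, zsmul_eq_mul, map_intCast]
  push_cast
  ring

/-- Lemma (part b): `Ω_{xy}^ℓ((x y)·𝒢) = ℓ(p+q−ℓ+3)·Ω_{xy}^{ℓ−1}𝒢 + (x y)·Ω_{xy}^ℓ𝒢`
for `𝒢` bihomogeneous of orders `(p,q)` and `ℓ ≥ 1`. -/
theorem omega_pow_bracket_comm {k : Type*} [Field k] [CharZero k]
    (G : MvPolynomial (Fin 4) k) (p q : ℕ) (ℓ : ℕ) (hl : 1 ≤ ℓ)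
    (hG : Bihomogeneous G p q) :
    Omega^[ℓ] (bracket * G)
      = C ((((ℓ : ℤ) * ((p : ℤ) + q - ℓ + 3) : ℤ) : k)) * Omega^[ℓ - 1] G
        + bracket * Omega^[ℓ] G := by
  have h := omega_pow_bracket_comm_general G (p + q) ℓ hl hG.isHomogeneous
  rwa [Nat.cast_add] at h
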